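/- arXiv:1508.05892 — 2 statements merged into one kernel-verified Lean document; each statement's English description precedes it below -/
import Mathlib

section
/- Any subset of U^{(p²)} whose elements pairwise commute has cardinality at most p². In particular, no set of p³−1 pairwise commuting elements of U^{(p²)} \ {I} exists. -/
/-!
The entries of `W(v) = (X^m Z^n) ⊗ (X^k Z^l)`, `v = (m, n, k, l)`, are
`W(v) (a, b) (c, d) = [a = c + m][b = d + k] ψ(n c + l d)`, where `ψ` is the standard additive
character of `ZMod p`. Comparing one entry of `W(v) W(w)` and `W(w) W(v)` and using that `ψ` is
injective, commuting operators have `ω(v, w) = 0` for the symplectic form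
`ω(v, w) = v₁ w₀ - v₀ w₁ + v₃ w₂ - v₂ w₃` on `(ZMod p)⁴`. Hence the labels of a pairwise commuting
set span a totally isotropic subspace. Since `ω` is nondegenerate, such a subspace has dimension at
most `4 / 2 = 2`, hence at most `p ^ 2` elements, and distinct operators have distinct labels.
-/

open Matrix
open scoped Kronecker

noncomputable section

/-- ω = exp(2πi/p), a primitive p-th root of unity. -/
def omega_p (p : ℕ) : ℂ := Complex.exp (2 * Real.pi * Complex.I / p)

/-- Generalized Pauli X on ℂ^p : X e_j = e_{j+1}. -/
def genX (p : ℕ) : Matrix (ZMod p) (ZMod p) ℂ :=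
  Matrix.of fun i j => if i = j + 1 then 1 else 0

/-- Generalized Pauli Z on ℂ^p : Z e_j = ω^j e_j. -/
def genZ (p : ℕ) : Matrix (ZMod p) (ZMod p) ℂ :=
  Matrix.of fun i j => if i = j then omega_p p ^ j.val else 0

/-- The space of p² × p² complex matrices. -/
abbrev PauliMat (p : ℕ) := Matrix (ZMod p × ZMod p) (ZMod p × ZMod p) ℂ

/-- The set U^{(p²)} of p⁴ two-particle generalized Pauli operators
    (X^m Z^n) ⊗ (X^k Z^l), with m,n,k,l ∈ {0,…,p−1}. -/
def PauliSet (p : ℕ) [NeZero p] : Set (PauliMat p) :=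
  { U | ∃ m n k l : ZMod p,
      U = (genX p ^ m.val * genZ p ^ n.val) ⊗ₖ (genX p ^ k.val * genZ p ^ l.val) }

/-- A maximal commuting class: a subset of U^{(p²)} \ {I} of cardinality p² − 1
    whose elements pairwise commute. -/
def MaxCommClass (p : ℕ) [NeZero p] (C : Set (PauliMat p)) : Prop :=
  C ⊆ PauliSet p \ {1} ∧ C.ncard = p ^ 2 - 1 ∧ ∀ U ∈ C, ∀ V ∈ C, Commute U V

/-- U ∘ V: the unique element of U^{(p²)} such that U·V is a power of ω times it. -/
def circ (p : ℕ) [NeZero p] (U V : PauliMat p) : PauliMat p :=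
  @Classical.epsilon _ ⟨(0 : PauliMat p)⟩
    fun W => W ∈ PauliSet p ∧ ∃ j : ℕ, U * V = omega_p p ^ j • W

/-- U^{∘k}: the unique element of U^{(p²)} such that the matrix power U^k is
    a power of ω times it. -/
def cpow (p : ℕ) [NeZero p] (U : PauliMat p) (k : ZMod p) : PauliMat p :=
  @Classical.epsilon _ ⟨(0 : PauliMat p)⟩
    fun W => W ∈ PauliSet p ∧ ∃ j : ℕ, U ^ k.val = omega_p p ^ j • W

/-- Independence: U^k is not a scalar multiple of V^l for any (k,l) ≠ (0,0). -/
def Indep (p : ℕ) [NeZero p] (U V : PauliMat p) : Prop :=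
  ∀ k l : ZMod p, (k, l) ≠ (0, 0) → ∀ c : ℂ, U ^ k.val ≠ c • V ^ l.val

/-- The class ⟨U,V⟩ generated by a pair of independent commuting operators:
    {U^{∘k} ∘ V^{∘l} : (k,l) ≠ (0,0)}. -/
def genClass (p : ℕ) [NeZero p] (U V : PauliMat p) : Set (PauliMat p) :=
  { W | ∃ k l : ZMod p, (k, l) ≠ (0, 0) ∧ W = circ p (cpow p U k) (cpow p V l) }

/-- A complete set of p² + 1 pairwise disjoint maximal commuting classes. -/
def CompleteSet (p : ℕ) [NeZero p] (S : Set (Set (PauliMat p))) : Prop :=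
  S.ncard = p ^ 2 + 1 ∧ (∀ C ∈ S, MaxCommClass p C) ∧ S.Pairwise Disjoint

/-- A family of classes is unextendible if no maximal commuting class is contained
    in U^{(p²)} \ ({I} ∪ ⋃ F). -/
def Unextendible (p : ℕ) [NeZero p] (F : Set (Set (PauliMat p))) : Prop :=
  ¬ ∃ C : Set (PauliMat p), MaxCommClass p C ∧ C ⊆ PauliSet p \ ({1} ∪ ⋃₀ F)

lemma omega_p_pow_val (p : ℕ) [NeZero p] (j : ZMod p) :
    omega_p p ^ j.val = ZMod.stdAddChar j := by
  have h : omega_p p = ZMod.stdAddChar (1 : ZMod p) := by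
    have := ZMod.stdAddChar_coe (N := p) 1
    simp only [Int.cast_one, mul_one] at this
    rw [this, omega_p]
  rw [h, ← AddChar.map_nsmul_eq_pow]
  simp

lemma genX_pow_apply (p : ℕ) [NeZero p] (n : ℕ) (i j : ZMod p) :
    (genX p ^ n) i j = if i = j + n then 1 else 0 := by
  induction n generalizing i j with
  | zero => simp [Matrix.one_apply]
  | succ n ih =>
    rw [pow_succ, Matrix.mul_apply, Finset.sum_eq_single (j + 1)]
    · rw [ih]
      simp [genX, add_assoc, add_comm (1 : ZMod p)]
    · intro b _ hb
      simp [genX, hb]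
    · simp

lemma genZ_pow_val_eq (p : ℕ) [NeZero p] (n : ZMod p) :
    genZ p ^ n.val = Matrix.diagonal fun j : ZMod p => ZMod.stdAddChar (n * j) := by
  have h : genZ p = Matrix.diagonal fun j : ZMod p => ZMod.stdAddChar j := by
    ext i j
    by_cases hij : i = j
    · subst hij
      simp [genZ, omega_p_pow_val]
    · simp [genZ, hij]
  rw [h, Matrix.diagonal_pow]
  congr 1
  funext j
  rw [Pi.pow_apply, ← AddChar.map_nsmul_eq_pow]
  simp [nsmul_eq_mul]

/-- The generalized Pauli operator `(X^m Z^n) ⊗ (X^k Z^l)` labelled by `v = (m, n, k, l)`. -/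
def pauliOp (p : ℕ) [NeZero p] (v : Fin 4 → ZMod p) : PauliMat p :=
  (genX p ^ (v 0).val * genZ p ^ (v 1).val) ⊗ₖ (genX p ^ (v 2).val * genZ p ^ (v 3).val)

lemma pauliOp_apply (p : ℕ) [NeZero p] (v : Fin 4 → ZMod p) (a b c d : ZMod p) :
    pauliOp p v (a, b) (c, d) =
      if a = c + v 0 ∧ b = d + v 2 then ZMod.stdAddChar (v 1 * c + v 3 * d) else 0 := by
  simp only [pauliOp, Matrix.kroneckerMap_apply, genZ_pow_val_eq, Matrix.mul_diagonal,
    genX_pow_apply, ZMod.natCast_zmod_val]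
  by_cases h1 : a = c + v 0 <;> by_cases h2 : b = d + v 2 <;>
    simp [h1, h2, AddChar.map_add_eq_mul]

/-- The only nonzero entry of the column of `W(v) W(w)` at `(0, 0)`. -/
lemma pauliOp_mul_apply (p : ℕ) [NeZero p] (v w : Fin 4 → ZMod p) :
    (pauliOp p v * pauliOp p w) (v 0 + w 0, v 2 + w 2) (0, 0) =
      ZMod.stdAddChar (v 1 * w 0 + v 3 * w 2) := by
  rw [Matrix.mul_apply, Finset.sum_eq_single (w 0, w 2)]
  · simp [pauliOp_apply, add_comm]
  · rintro ⟨a, b⟩ - hne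
    have : ¬ (a = w 0 ∧ b = w 2) := by simpa using hne
    simp [pauliOp_apply, this]
  · simp

/-- The Gram matrix of the symplectic form `v₁ w₀ - v₀ w₁ + v₃ w₂ - v₂ w₃`. -/
def sympMat (p : ℕ) : Matrix (Fin 4) (Fin 4) (ZMod p) :=
  !![0, -1, 0, 0; 1, 0, 0, 0; 0, 0, 0, -1; 0, 0, 1, 0]

lemma sympMat_apply (p : ℕ) (v w : Fin 4 → ZMod p) :
    (sympMat p).toBilin' v w = v 1 * w 0 - v 0 * w 1 + (v 3 * w 2 - v 2 * w 3) := by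
  simp [Matrix.toBilin'_apply, sympMat, Fin.sum_univ_four]
  ring

lemma sympMat_nondegenerate (p : ℕ) [Fact p.Prime] : (sympMat p).toBilin'.Nondegenerate := by
  apply LinearMap.BilinForm.nondegenerate_toBilin'_of_det_ne_zero'
  have : (sympMat p).det = 1 := by
    simp [sympMat, Matrix.det_succ_row_zero, Fin.sum_univ_succ, Fin.succAbove]
  rw [this]
  exact one_ne_zero

lemma symp_eq_zero_of_commute (p : ℕ) [NeZero p] (v w : Fin 4 → ZMod p)
    (h : Commute (pauliOp p v) (pauliOp p w)) : (sympMat p).toBilin' v w = 0 := by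
  have h1 := pauliOp_mul_apply p v w
  have h2 := pauliOp_mul_apply p w v
  rw [h.eq, add_comm (v 0), add_comm (v 2), h2] at h1
  have h3 := ZMod.injective_stdAddChar h1
  rw [sympMat_apply]
  linear_combination -h3

/-- Pairwise orthogonal vectors span a totally isotropic subspace, which has dimension at most 2. -/
lemma finrank_span_le_two (p : ℕ) [Fact p.Prime] (T : Set (Fin 4 → ZMod p))
    (hT : ∀ v ∈ T, ∀ w ∈ T, (sympMat p).toBilin' v w = 0) :
    Module.finrank (ZMod p) (Submodule.span (ZMod p) T) ≤ 2 := by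
  have hle : Submodule.span (ZMod p) T ≤
      (sympMat p).toBilin'.orthogonal (Submodule.span (ZMod p) T) := by
    intro w hw
    rw [LinearMap.BilinForm.mem_orthogonal_iff]
    intro v hv
    change (sympMat p).toBilin' v w = 0
    induction hv, hw using Submodule.span_induction₂ with
    | mem_mem x y hx hy => exact hT x hx y hy
    | zero_left y hy => simp
    | zero_right x hx => simp
    | add_left x y z hx hy hz h1 h2 => simp [h1, h2]
    | add_right x y z hx hy hz h1 h2 => simp [h1, h2]
    | smul_left r x y hx hy h => simp [h]
    | smul_right r x y hx hy h => simp [h]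
  have h1 := Submodule.finrank_mono hle
  rw [LinearMap.BilinForm.finrank_orthogonal (sympMat_nondegenerate p)] at h1
  simp only [Module.finrank_fintype_fun_eq_card, Fintype.card_fin] at h1
  omega

lemma ncard_le_of_commute (p : ℕ) [NeZero p] (hp : p.Prime) (S : Set (PauliMat p))
    (hS : S ⊆ PauliSet p) (hc : ∀ U ∈ S, ∀ V ∈ S, Commute U V) : S.ncard ≤ p ^ 2 := by
  have : Fact p.Prime := ⟨hp⟩
  have hlabel : ∀ U ∈ S, ∃ v, U = pauliOp p v := by
    intro U hU
    obtain ⟨m, n, k, l, h⟩ := hS hU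
    exact ⟨![m, n, k, l], h⟩
  choose! f hf using hlabel
  have hiso : ∀ v ∈ f '' S, ∀ w ∈ f '' S, (sympMat p).toBilin' v w = 0 := by
    rintro _ ⟨U, hU, rfl⟩ _ ⟨V, hV, rfl⟩
    apply symp_eq_zero_of_commute
    rw [← hf U hU, ← hf V hV]
    exact hc U hU V hV
  have hinj : Set.InjOn f S := by
    intro U hU V hV h
    rw [hf U hU, hf V hV, h]
  calc S.ncard = (f '' S).ncard := (hinj.ncard_image).symm
    _ ≤ (Submodule.span (ZMod p) (f '' S) : Set (Fin 4 → ZMod p)).ncard :=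
      Set.ncard_le_ncard Submodule.subset_span (Set.toFinite _)
    _ = Nat.card (Submodule.span (ZMod p) (f '' S)) := rfl
    _ = p ^ Module.finrank (ZMod p) (Submodule.span (ZMod p) (f '' S)) := by
      rw [Module.natCard_eq_pow_finrank (K := ZMod p), Nat.card_zmod]
    _ ≤ p ^ 2 := Nat.pow_le_pow_right hp.pos (finrank_span_le_two p _ hiso)

/-- Any pairwise commuting subset of U^{(p²)} has at most p² elements;
in particular there is no set of p³ − 1 pairwise commuting elements of U^{(p²)} \ {I}. -/
theorem stmt1 (p : ℕ) [NeZero p] (hp : p.Prime) :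
    (∀ S : Set (PauliMat p), S ⊆ PauliSet p →
        (∀ U ∈ S, ∀ V ∈ S, Commute U V) → S.ncard ≤ p ^ 2) ∧
    ¬ ∃ S : Set (PauliMat p), S ⊆ PauliSet p \ {1} ∧
        (∀ U ∈ S, ∀ V ∈ S, Commute U V) ∧ S.ncard = p ^ 3 - 1 := by
  refine ⟨ncard_le_of_commute p hp, ?_⟩
  rintro ⟨S, hS, hc, hcard⟩
  have h := ncard_le_of_commute p hp S (fun U hU => (hS hU).1) hc
  rw [hcard] at h
  have h2 := hp.two_le
  have h3 : 2 * p ^ 2 ≤ p ^ 3 := by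
    rw [pow_succ p 2, mul_comm]
    exact Nat.mul_le_mul_left _ h2
  have h4 : 2 ^ 2 ≤ p ^ 2 := Nat.pow_le_pow_left h2 2
  omega
end
end

section
/- Let U₁, U₂ be independent commuting elements of U^{(p²)} \ {I} and V₁, V₂ be independent commuting elements of U^{(p²)} \ {I}, such that the generated classes C₁ = ⟨U₁,U₂⟩ and C₂ = ⟨V₁,V₂⟩ are disjoint maximal commuting classes, and suppose U₁V₁ = V₁U₁, U₂V₂ = V₂U₂, U₁V₂ ≠ V₂U₁ and U₂V₁ ≠ V₁U₂. Then for every l ∈ Z/p there exists a unique m ∈ Z/p such that (U₁^l V₁)(U₂^m V₂) = (U₂^m V₂)(U₁^l V₁). -/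
/-!
Any two generalized Pauli operators commute up to a `p`-th root of unity, because this is true of
`X` and `Z` (where `Z X = ω X Z`) and the property passes to products and Kronecker products
(`exists_twist_of_mem`). Write `U₁ V₂ = α V₂ U₁` and `V₁ U₂ = β U₂ V₁` with `α ^ p = β ^ p = 1`.
Since `U₁` commutes with `U₂` and `V₁` with `V₂`, the operators `U₁ ^ l V₁` and `U₂ ^ m V₂` commute
up to the factor `α ^ l β ^ m`; as all the operators are invertible, they commute exactly when
`α ^ l β ^ m = 1`. Now `β ≠ 1` because `U₂` and `V₁` do not commute, so `β` is a primitive `p`-th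
root of unity (`p` is prime), and `β ^ m = (α ^ l)⁻¹` has exactly one solution `m` modulo `p`.
-/

open Matrix
open scoped Kronecker

noncomputable section

/-- `A` and `B` commute up to the scalar `c`: `A B = c B A`. -/
def Twist {ι : Type*} [Fintype ι] (c : ℂ) (A B : Matrix ι ι ℂ) : Prop :=
  A * B = c • (B * A)

section Twist

variable {ι κ : Type*} [Fintype ι] [Fintype κ]

lemma twist_one_iff {A B : Matrix ι ι ℂ} : Twist 1 A B ↔ Commute A B := by
  simp [Twist, Commute, SemiconjBy]

lemma Twist.mul_left {c d : ℂ} {A A' B : Matrix ι ι ℂ} (h : Twist c A B) (h' : Twist d A' B) :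
    Twist (c * d) (A * A') B := by
  unfold Twist at *
  rw [mul_assoc, h', mul_smul_comm, ← mul_assoc, h, smul_mul_assoc, smul_smul, mul_assoc,
    mul_comm d]

lemma Twist.mul_right {c d : ℂ} {A B B' : Matrix ι ι ℂ} (h : Twist c A B) (h' : Twist d A B') :
    Twist (c * d) A (B * B') := by
  unfold Twist at *
  rw [← mul_assoc, h, smul_mul_assoc, mul_assoc, h', mul_smul_comm, smul_smul, mul_assoc]

lemma Twist.pow_left [DecidableEq ι] {c : ℂ} {A B : Matrix ι ι ℂ} (h : Twist c A B) (n : ℕ) :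
    Twist (c ^ n) (A ^ n) B := by
  induction n with
  | zero => simp [Twist]
  | succ n ih => rw [pow_succ, pow_succ]; exact ih.mul_left h

lemma Twist.pow_right [DecidableEq ι] {c : ℂ} {A B : Matrix ι ι ℂ} (h : Twist c A B) (n : ℕ) :
    Twist (c ^ n) A (B ^ n) := by
  induction n with
  | zero => simp [Twist]
  | succ n ih => rw [pow_succ, pow_succ]; exact ih.mul_right h

lemma Twist.symm {c : ℂ} {A B : Matrix ι ι ℂ} (hc : c ≠ 0) (h : Twist c A B) :
    Twist c⁻¹ B A := by
  unfold Twist at *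
  rw [h, smul_smul, inv_mul_cancel₀ hc, one_smul]

lemma Twist.kronecker {c d : ℂ} {A B : Matrix ι ι ℂ} {A' B' : Matrix κ κ ℂ}
    (h : Twist c A B) (h' : Twist d A' B') : Twist (c * d) (A ⊗ₖ A') (B ⊗ₖ B') := by
  unfold Twist at *
  rw [← mul_kronecker_mul, ← mul_kronecker_mul, h, h', smul_kronecker, kronecker_smul, smul_smul]

end Twist

lemma omega_p_pow (p : ℕ) [NeZero p] : omega_p p ^ p = 1 :=
  (Complex.isPrimitiveRoot_exp p (NeZero.ne p)).pow_eq_one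

lemma omega_p_ne_zero (p : ℕ) : omega_p p ≠ 0 := Complex.exp_ne_zero _

lemma genZ_eq_diagonal (p : ℕ) : genZ p = diagonal fun j : ZMod p => omega_p p ^ j.val := by
  ext i j
  by_cases h : i = j
  · subst h; simp [genZ]
  · simp [genZ, h]

/-- The relation `Z X = ω X Z`. -/
lemma twist_genZ_genX (p : ℕ) [NeZero p] : Twist (omega_p p) (genZ p) (genX p) := by
  unfold Twist
  rw [genZ_eq_diagonal]
  ext i j
  rw [diagonal_mul, Matrix.smul_apply, mul_diagonal]
  by_cases h : i = j + 1
  · have key : omega_p p ^ (j + 1).val = omega_p p ^ (j.val + 1) := by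
      rw [ZMod.val_add, pow_add, ZMod.val_one_eq_one_mod, ← pow_add, Nat.add_mod_mod]
      exact (pow_eq_pow_mod _ (omega_p_pow p)).symm
    subst h
    simp [genX, key, pow_succ, mul_comm]
  · simp [genX, h]

lemma isUnit_genZ (p : ℕ) [NeZero p] : IsUnit (genZ p) := by
  rw [genZ_eq_diagonal, Matrix.isUnit_iff_isUnit_det, det_diagonal, isUnit_iff_ne_zero]
  exact Finset.prod_ne_zero_iff.2 fun j _ => pow_ne_zero _ (omega_p_ne_zero p)

lemma isUnit_genX (p : ℕ) [NeZero p] : IsUnit (genX p) := by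
  -- `X` is a permutation matrix, so its transpose is its inverse.
  refine IsUnit.of_mul_eq_one (genX p)ᵀ ?_
  ext i j
  rw [Matrix.mul_apply, Finset.sum_eq_single (i - 1)]
  · simp [genX, Matrix.one_apply, eq_comm]
  · intro k _ hk
    have : i ≠ k + 1 := fun h => hk (by simp [h])
    simp [genX, this]
  · simp

lemma isUnit_of_mem {p : ℕ} [NeZero p] {U : PauliMat p} (hU : U ∈ PauliSet p) : IsUnit U := by
  obtain ⟨m, n, k, l, rfl⟩ := hU
  have h (a b : ℕ) : IsUnit (genX p ^ a * genZ p ^ b).det :=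
    (Matrix.isUnit_iff_isUnit_det _).1 (((isUnit_genX p).pow a).mul ((isUnit_genZ p).pow b))
  rw [Matrix.isUnit_iff_isUnit_det, det_kronecker]
  exact ((h _ _).pow _).mul ((h _ _).pow _)

/-- One-particle Pauli operators commute up to a `p`-th root of unity. -/
lemma exists_twist_single (p : ℕ) [NeZero p] (a b c d : ℕ) :
    ∃ ζ : ℂ, ζ ^ p = 1 ∧
      Twist ζ (genX p ^ a * genZ p ^ b) (genX p ^ c * genZ p ^ d) := by
  have hXX : Twist 1 (genX p) (genX p) := twist_one_iff.2 (Commute.refl _)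
  have hZZ : Twist 1 (genZ p) (genZ p) := twist_one_iff.2 (Commute.refl _)
  have hZX := twist_genZ_genX p
  have hXZ := hZX.symm (omega_p_ne_zero p)
  refine ⟨_, ?_, (((hXX.pow_left a).pow_right c).mul_right ((hXZ.pow_left a).pow_right d)).mul_left
    (((hZX.pow_left b).pow_right c).mul_right ((hZZ.pow_left b).pow_right d))⟩
  have hω (x y : ℕ) : ((omega_p p ^ x) ^ y) ^ p = 1 := by
    rw [pow_right_comm _ y p, pow_right_comm _ x p, omega_p_pow, one_pow, one_pow]
  simp [mul_pow, inv_pow, hω]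

lemma exists_twist_of_mem {p : ℕ} [NeZero p] {U V : PauliMat p} (hU : U ∈ PauliSet p)
    (hV : V ∈ PauliSet p) : ∃ ζ : ℂ, ζ ^ p = 1 ∧ Twist ζ U V := by
  obtain ⟨m, n, k, l, rfl⟩ := hU
  obtain ⟨m', n', k', l', rfl⟩ := hV
  obtain ⟨ζ, hζ, h⟩ := exists_twist_single p m.val n.val m'.val n'.val
  obtain ⟨ξ, hξ, h'⟩ := exists_twist_single p k.val l.val k'.val l'.val
  exact ⟨ζ * ξ, by rw [mul_pow, hζ, hξ, one_mul], h.kronecker h'⟩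

/-- For invertible operators the twisting scalar is determined by the pair. -/
lemma Twist.commute_iff {ι : Type*} [Fintype ι] [DecidableEq ι] [Nonempty ι] {c : ℂ}
    {A B : Matrix ι ι ℂ} (h : Twist c A B) (hA : IsUnit A) (hB : IsUnit B) :
    Commute A B ↔ c = 1 := by
  constructor
  · intro hc
    have h1 : c • (B * A) = (1 : ℂ) • (B * A) := by rw [← h, one_smul, hc.eq]
    exact smul_left_injective ℂ (hB.mul hA).ne_zero h1
  · rintro rfl
    exact twist_one_iff.1 h

/-- Given disjoint classes C₁ = ⟨U₁,U₂⟩ and C₂ = ⟨V₁,V₂⟩ with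
[U₁,V₁] = [U₂,V₂] = 0, [U₁,V₂] ≠ 0 and [U₂,V₁] ≠ 0, for every l ∈ Z/p there is a
unique m ∈ Z/p such that U₁^l V₁ and U₂^m V₂ commute. -/
theorem stmt4 (p : ℕ) [NeZero p] (hp : p.Prime)
    (U₁ U₂ V₁ V₂ : PauliMat p)
    (hU₁ : U₁ ∈ PauliSet p \ {1}) (hU₂ : U₂ ∈ PauliSet p \ {1})
    (hV₁ : V₁ ∈ PauliSet p \ {1}) (hV₂ : V₂ ∈ PauliSet p \ {1})
    (hUind : Indep p U₁ U₂) (hUc : Commute U₁ U₂)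
    (hVind : Indep p V₁ V₂) (hVc : Commute V₁ V₂)
    (hC₁ : MaxCommClass p (genClass p U₁ U₂))
    (hC₂ : MaxCommClass p (genClass p V₁ V₂))
    (hdisj : Disjoint (genClass p U₁ U₂) (genClass p V₁ V₂))
    (h11 : Commute U₁ V₁) (h22 : Commute U₂ V₂)
    (h12 : ¬ Commute U₁ V₂) (h21 : ¬ Commute U₂ V₁) :
    ∀ l : ZMod p, ∃! m : ZMod p,
      Commute (U₁ ^ l.val * V₁) (U₂ ^ m.val * V₂) := by
  obtain ⟨α, hα, hαt⟩ := exists_twist_of_mem hU₁.1 hV₂.1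
  obtain ⟨β, hβ, hβt⟩ := exists_twist_of_mem hV₁.1 hU₂.1
  have uU₁ := isUnit_of_mem hU₁.1
  have uU₂ := isUnit_of_mem hU₂.1
  have uV₁ := isUnit_of_mem hV₁.1
  have uV₂ := isUnit_of_mem hV₂.1
  have hβ1 : β ≠ 1 := fun h => h21 ((hβt.commute_iff uV₁ uU₂).2 h).symm
  have hprim : IsPrimitiveRoot β p := by
    have := Fact.mk hp
    exact orderOf_eq_prime hβ hβ1 ▸ IsPrimitiveRoot.orderOf β
  have hα0 : α ≠ 0 := by
    rintro rfl
    simp [hp.ne_zero] at hα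
  have key (l m : ZMod p) :
      Commute (U₁ ^ l.val * V₁) (U₂ ^ m.val * V₂) ↔ α ^ l.val * β ^ m.val = 1 := by
    have hUU : Twist 1 (U₁ ^ l.val) (U₂ ^ m.val) := twist_one_iff.2 (hUc.pow_pow _ _)
    have hVV : Twist 1 V₁ V₂ := twist_one_iff.2 hVc
    have h := (hUU.mul_right (hαt.pow_left l.val)).mul_left
      ((hβt.pow_right m.val).mul_right hVV)
    rw [h.commute_iff ((uU₁.pow _).mul uV₁) ((uU₂.pow _).mul uV₂), one_mul, mul_one]
  intro l
  have hξ : ((α ^ l.val)⁻¹) ^ p = 1 := by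
    rw [inv_pow, ← pow_mul, mul_comm, pow_mul, hα, one_pow, inv_one]
  obtain ⟨i, hi, hie⟩ := hprim.eq_pow_of_pow_eq_one hξ
  have hsol (m : ZMod p) : α ^ l.val * β ^ m.val = 1 ↔ m.val = i := by
    rw [mul_eq_one_iff_inv_eq₀ (pow_ne_zero _ hα0), ← hie]
    exact ⟨fun h => (hprim.pow_inj hi (ZMod.val_lt m) h).symm, fun h => by rw [h]⟩
  refine ⟨(i : ZMod p), ?_, fun m hm => ?_⟩
  · exact (key l _).2 ((hsol _).2 (ZMod.val_cast_of_lt hi))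
  · rw [← (hsol m).1 ((key l m).1 hm), ZMod.natCast_zmod_val]
end
end
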